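/- Let D be a triangulated category, H and H0 hearts of bounded t-structures on D with H[1] ≤ H0 ≤ H[2], and S a rigid simple object of H for which the simple backward tilt H^♭_S is defined. Then the following are equivalent: (i) S[2] ∉ H0; (ii) H0 ≤ H^♭_S[2]; (iii) S[1] ∈ H0. Consequently, exactly one of S[1] ∈ H0 and S[2] ∈ H0 holds; in particular S ∈ H0[-1] or S ∈ H0[-2]. -/

import Mathlib

open CategoryTheory Category Limits Pretriangulated ZeroObject

universe v u

namespace Paper

variable (C : Type u) [Category.{v} C] [HasZeroObject C] [HasShift C ℤ]
  [Preadditive C] [∀ n : ℤ, (shiftFunctor C n).Additive] [Pretriangulated C]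

/-- The right perpendicular of a set of objects: objects receiving no nonzero
morphism from the set. -/
def perp (P : Set C) : Set C := {G | ∀ F ∈ P, ∀ f : F ⟶ G, f = 0}

/-- A bounded t-structure on a (pre)triangulated category, given by its aisle `P`. -/
structure TStr where
  P : Set C
  /-- `P` is closed under direct summands (hence under isomorphism). -/
  summand : ∀ (X Y : C) (i : Y ⟶ X) (r : X ⟶ Y), i ≫ r = 𝟙 Y → X ∈ P → Y ∈ P
  /-- `P[1] ⊆ P`. -/
  shift_mem : ∀ X ∈ P, X⟦(1 : ℤ)⟧ ∈ P
  /-- Every object fits in a triangle `F → E → G → F[1]` with `F ∈ P` and `G ∈ P^⊥`. -/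
  exists_triangle : ∀ E : C, ∃ (F G : C) (f : F ⟶ E) (g : E ⟶ G) (h : G ⟶ F⟦(1 : ℤ)⟧),
    F ∈ P ∧ G ∈ perp C P ∧ Triangle.mk f g h ∈ distTriang C
  /-- `M[k] ∈ P` for `k ≫ 0`. -/
  bounded_above : ∀ M : C, ∃ a : ℤ, ∀ j : ℤ, a ≤ j → M⟦j⟧ ∈ P
  /-- `M[k] ∈ P^⊥` for `k ≪ 0`. -/
  bounded_below : ∀ M : C, ∃ b : ℤ, ∀ j : ℤ, j ≤ b → M⟦j⟧ ∈ perp C P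

/-- The heart `H = P^⊥[1] ∩ P` of a bounded t-structure. -/
def heart (T : TStr C) : Set C := {X | X ∈ T.P ∧ X⟦(-1 : ℤ)⟧ ∈ perp C T.P}

/-- The shift `S[m]` of a set of objects. -/
def shiftSet (S : Set C) (m : ℤ) : Set C := {X | X⟦(-m : ℤ)⟧ ∈ S}

/-- An object `P` is a projective of a heart if `Hom(P, M[k]) = 0` for all `k ≠ 0`
and all `M` in the heart. -/
def IsProjOf (T : TStr C) (P : C) : Prop :=
  ∀ (k : ℤ), k ≠ 0 → ∀ M ∈ heart C T, ∀ f : P ⟶ M⟦k⟧, f = 0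

/-- A filtration of an object `M` by triangles with factors in the heart, shifted by a
strictly decreasing sequence of degrees: the canonical filtration associated to a bounded
t-structure. -/
structure HeartFiltration (T : TStr C) (M : C) where
  n : ℕ
  obj : ℕ → C
  deg : ℕ → ℤ
  factor : ℕ → C
  zero : IsZero (obj 0)
  top : obj n ≅ M
  mem : ∀ i, 1 ≤ i → i ≤ n → factor i ∈ heart C T
  strict : ∀ i j, 1 ≤ i → i < j → j ≤ n → deg j < deg i
  tri : ∀ i, 1 ≤ i → i ≤ n →
    ∃ (f : obj (i - 1) ⟶ obj i) (g : obj i ⟶ (factor i)⟦deg i⟧)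
      (h : (factor i)⟦deg i⟧ ⟶ (obj (i - 1))⟦(1 : ℤ)⟧),
      Triangle.mk f g h ∈ distTriang C

variable {C}

open Classical in
/-- The homology `H^k(M)` of `M` with respect to the heart, read off from a
filtration: the factor in degree `k` if there is one, and `0` otherwise. -/
noncomputable def HeartFiltration.homologyAt {T : TStr C} {M : C}
    (F : HeartFiltration C T M) (k : ℤ) : C :=
  if h : ∃ i, 1 ≤ i ∧ i ≤ F.n ∧ F.deg i = k then F.factor h.choose else 0

variable (C)

/-- A torsion pair `⟨F, T⟩` in the heart of a bounded t-structure: `Hom(T, F) = 0` and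
every object of the heart is an extension (triangle) of an `F`-object by a `T`-object. -/
structure TorsionPairIn (T : TStr C) where
  free : Set C
  tor : Set C
  free_sub : free ⊆ heart C T
  tor_sub : tor ⊆ heart C T
  hom_zero : ∀ X ∈ tor, ∀ Y ∈ free, ∀ f : X ⟶ Y, f = 0
  exists_ses : ∀ E ∈ heart C T, ∃ (A B : C) (f : A ⟶ E) (g : E ⟶ B) (h : B ⟶ A⟦(1 : ℤ)⟧),
    A ∈ tor ∧ B ∈ free ∧ Triangle.mk f g h ∈ distTriang C

/-- The forward tilt `H^♯` of the heart at a torsion pair `⟨free, tor⟩`: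
objects `E` with `H^1(E) ∈ F`, `H^0(E) ∈ T` and `H^i(E) = 0` otherwise. -/
def tiltSharpSet (T : TStr C) (free tor : Set C) : Set C :=
  {E | ∀ (F : HeartFiltration C T E) (i : ℕ), 1 ≤ i → i ≤ F.n →
    IsZero (F.factor i) ∨ (F.deg i = 1 ∧ F.factor i ∈ free) ∨
      (F.deg i = 0 ∧ F.factor i ∈ tor)}

/-- The backward tilt `H^♭` of the heart at a torsion pair `⟨free, tor⟩`:
objects `E` with `H^0(E) ∈ F`, `H^{-1}(E) ∈ T` and `H^i(E) = 0` otherwise. -/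
def tiltFlatSet (T : TStr C) (free tor : Set C) : Set C :=
  {E | ∀ (F : HeartFiltration C T E) (i : ℕ), 1 ≤ i → i ≤ F.n →
    IsZero (F.factor i) ∨ (F.deg i = 0 ∧ F.factor i ∈ free) ∨
      (F.deg i = -1 ∧ F.factor i ∈ tor)}

/-- Simple objects of a heart (or of any full subcategory closed under the abelian
structure): nonzero objects which are not the middle term of a nontrivial short exact
sequence (triangle) in the heart. -/
def IsSimpleIn (H : Set C) (X : C) : Prop :=
  X ∈ H ∧ ¬ IsZero X ∧ ∀ (A B : C) (f : A ⟶ X) (g : X ⟶ B) (h : B ⟶ A⟦(1 : ℤ)⟧),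
    A ∈ H → B ∈ H → Triangle.mk f g h ∈ (distTriang C) → IsZero A ∨ IsZero B

/-- A heart is finite if it has finitely many simples up to isomorphism and every object
is a finite iterated extension of simple objects. -/
def FiniteHeart (T : TStr C) : Prop :=
  (∃ (n : ℕ) (S : Fin n → C), (∀ i, IsSimpleIn C (heart C T) (S i)) ∧
    ∀ X, IsSimpleIn C (heart C T) X → ∃ i, Nonempty (X ≅ S i)) ∧
  ∀ M ∈ heart C T, ∃ (m : ℕ) (obj : ℕ → C), IsZero (obj 0) ∧ Nonempty (obj m ≅ M) ∧
    ∀ i < m, ∃ (s : C) (f : obj i ⟶ obj (i + 1)) (g : obj (i + 1) ⟶ s)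
      (h : s ⟶ (obj i)⟦(1 : ℤ)⟧),
      IsSimpleIn C (heart C T) s ∧ Triangle.mk f g h ∈ distTriang C

section Biproducts

variable [HasFiniteBiproducts C]

/-- Finite direct sums of copies of an object `S`. -/
def addObj (S : C) : Set C := {M | ∃ n : ℕ, Nonempty (M ≅ ⨁ (fun _ : Fin n => S))}

/-- The simple forward tilt `H^♯_S` of the heart at a rigid simple `S`: the forward tilt
at the torsion pair whose free part consists of finite direct sums of copies of `S`. -/
def simpleSharpSet (T : TStr C) (S : C) : Set C :=
  tiltSharpSet C T (addObj C S) {M | M ∈ heart C T ∧ ∀ f : M ⟶ S, f = 0}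

/-- The simple backward tilt `H^♭_S` of the heart at a rigid simple `S`: the backward
tilt at the torsion pair whose torsion part consists of finite direct sums of copies
of `S`. -/
def simpleFlatSet (T : TStr C) (S : C) : Set C :=
  tiltFlatSet C T {M | M ∈ heart C T ∧ ∀ f : S ⟶ M, f = 0} (addObj C S)

end Biproducts


section TStructures

open Triangulated

variable {C}

/-- The t-structure in Mathlib's sense attached to an aisle. -/
def TStr.toTStructure (T : TStr C) : TStructure C where
  le n X := X⟦n⟧ ∈ T.P
  ge n X := X⟦n - 1⟧ ∈ perp C T.P
  le_isClosedUnderIsomorphisms n := ⟨fun e hX ↦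
    T.summand _ _ (e.inv⟦n⟧') (e.hom⟦n⟧') (by simp [← Functor.map_comp]) hX⟩
  ge_isClosedUnderIsomorphisms n := ⟨fun e hX F hF f ↦ by
    rw [← cancel_mono (e.inv⟦n - 1⟧'), zero_comp]
    exact hX F hF _⟩
  le_shift n a n' h X hX := by
    let e := (shiftFunctorAdd' C a n' n h).app X
    exact T.summand _ _ e.inv e.hom e.inv_hom_id hX
  ge_shift n a n' h X hX F hF f := by
    let e := (shiftFunctorAdd' C a (n' - 1) (n - 1) (by lia)).app X
    rw [← cancel_mono e.inv, zero_comp]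
    exact hX F hF _
  zero' X Y f hX hY := by
    let eX := (shiftFunctorZero C ℤ).app X
    let eY := (shiftFunctorZero' C (1 - 1 : ℤ) (by simp)).app Y
    rw [← cancel_mono eY.inv, ← cancel_epi eX.hom, zero_comp, comp_zero]
    exact hY _ hX _
  le_zero_le X hX := by
    have e := (shiftFunctorZero C ℤ).app X
    exact T.shift_mem _ (T.summand _ _ e.inv e.hom e.inv_hom_id hX)
  ge_one_le X hX F hF f := by
    apply (shiftFunctor C (1 : ℤ)).map_injective
    let e := (shiftFunctorAdd' C (0 - 1 : ℤ) 1 (1 - 1) (by simp)).app X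
    rw [Functor.map_zero, ← cancel_mono e.inv, zero_comp]
    exact hX _ (T.shift_mem _ hF) _
  exists_triangle_zero_one A := by
    obtain ⟨F, G, f, g, h, hF, hG, mem⟩ := T.exists_triangle A
    refine ⟨F, G, ?_, fun K hK k ↦ ?_, f, g, h, mem⟩
    · let e := (shiftFunctorZero C ℤ).app F
      exact T.summand _ _ e.hom e.inv e.hom_inv_id hF
    · let e := (shiftFunctorZero' C (1 - 1 : ℤ) (by simp)).app G
      rw [← cancel_mono e.hom, zero_comp]
      exact hG _ hK _

variable (T : TStr C)

lemma TStr.shift_mem_P_iff (X : C) (n : ℤ) : X⟦n⟧ ∈ T.P ↔ T.toTStructure.IsLE X n :=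
  T.toTStructure.le_iff_isLE X n

lemma TStr.mem_P_iff (X : C) : X ∈ T.P ↔ T.toTStructure.IsLE X 0 := by
  rw [← T.shift_mem_P_iff]
  let e := (shiftFunctorZero C ℤ).app X
  exact ⟨T.summand _ _ e.hom e.inv e.hom_inv_id, T.summand _ _ e.inv e.hom e.inv_hom_id⟩

lemma TStr.mem_shiftSet_P_iff (X : C) (m : ℤ) :
    X ∈ shiftSet C T.P m ↔ T.toTStructure.IsLE X (-m) :=
  T.shift_mem_P_iff X (-m)

lemma TStr.mem_heart_iff (X : C) :
    X ∈ heart C T ↔ T.toTStructure.IsLE X 0 ∧ T.toTStructure.IsGE X 0 :=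
  and_congr (T.mem_P_iff X) (T.toTStructure.ge_iff_isGE X 0)

lemma TStr.shift_mem_heart_iff (X : C) (n : ℤ) :
    X⟦n⟧ ∈ heart C T ↔ T.toTStructure.IsLE X n ∧ T.toTStructure.IsGE X n := by
  rw [T.mem_heart_iff, T.toTStructure.isLE_shift_iff X n n 0, T.toTStructure.isGE_shift_iff X n n 0]

lemma TStr.exists_isGE (M : C) : ∃ n : ℤ, T.toTStructure.IsGE M n := by
  obtain ⟨b, hb⟩ := T.bounded_below M
  exact ⟨b, ⟨hb (b - 1) (by lia)⟩⟩

lemma isLE₃ (t : TStructure C) {X Y Z : C} {f : X ⟶ Y} {g : Y ⟶ Z} {h : Z ⟶ X⟦(1 : ℤ)⟧}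
    (mem : Triangle.mk f g h ∈ distTriang C) (n : ℤ) (hX : t.IsLE X (n + 1)) (hY : t.IsLE Y n) :
    t.IsLE Z n :=
  t.isLE₂ _ (rot_of_distTriang _ mem) n hY (t.isLE_shift X (n + 1) 1 n)

lemma isGE₁ (t : TStructure C) {X Y Z : C} {f : X ⟶ Y} {g : Y ⟶ Z} {h : Z ⟶ X⟦(1 : ℤ)⟧}
    (mem : Triangle.mk f g h ∈ distTriang C) (n : ℤ) (hY : t.IsGE Y n) (hZ : t.IsGE Z (n - 1)) :
    t.IsGE X n :=
  t.isGE₂ _ (inv_rot_of_distTriang _ mem) n (t.isGE_shift Z (n - 1) (-1) n) hY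

lemma distinguished_of_iso₁₃ {X X' Y Z Z' : C} {f : X ⟶ Y} {g : Y ⟶ Z} {h : Z ⟶ X⟦(1 : ℤ)⟧}
    (mem : Triangle.mk f g h ∈ distTriang C) (e : X' ≅ X) (e' : Z' ≅ Z) :
    Triangle.mk (e.hom ≫ f) (g ≫ e'.inv) (e'.hom ≫ h ≫ e.inv⟦(1 : ℤ)⟧') ∈ distTriang C := by
  refine isomorphic_distinguished _ mem _ (Triangle.isoMk _ _ e (Iso.refl Y) e' ?_ ?_ ?_)
  · exact comp_id _
  · change (g ≫ e'.inv) ≫ e'.hom = 𝟙 Y ≫ g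
    simp
  · change (e'.hom ≫ h ≫ e.inv⟦(1 : ℤ)⟧') ≫ e.hom⟦(1 : ℤ)⟧' = e'.hom ≫ h
    simp [← Functor.map_comp]

/-- The canonical filtration of an object concentrated in a bounded range of degrees. -/
lemma exists_heartFiltration (n : ℕ) : ∀ (k : ℤ) (E : C), T.toTStructure.IsLE E k →
    T.toTStructure.IsGE E (k - n + 1) →
    ∃ F : HeartFiltration C T E, F.n = n ∧ ∀ i, F.deg i = n - k - i := by
  let t := T.toTStructure
  induction n with
  | zero =>
    intro k E hLE hGE
    have hGE : t.IsGE E (k + 1) := by simpa using hGE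
    exact ⟨{  n := 0
              obj := fun _ ↦ E
              deg := fun i ↦ (0 : ℕ) - k - i
              factor := fun _ ↦ E
              zero := t.isZero E k (k + 1)
              top := Iso.refl _
              mem := by lia
              strict := by lia
              tri := by lia }, rfl, fun _ ↦ rfl⟩
  | succ n ih =>
    intro k E hLE hGE
    obtain ⟨A, B, hA, hB, f, g, h, mem⟩ := t.exists_triangle E (k - 1) k (by lia)
    replace hA : t.IsLE A (k - 1) := ⟨hA⟩
    replace hB : t.IsGE B k := ⟨hB⟩
    have hGE' : t.IsGE E (k - 1 - n + 1) := by
      convert hGE using 1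
      push_cast
      ring
    have hB' : t.IsLE B k := isLE₃ t mem k (t.isLE_of_le A (k - 1) (k + 1)) hLE
    obtain ⟨F, hn, hdeg⟩ := ih (k - 1) A hA
      (isGE₁ t mem _ hGE' (t.isGE_of_ge B _ k))
    let e : F.obj n ≅ A := eqToIso (by rw [hn]) ≪≫ F.top
    let eB : B⟦k⟧⟦-k⟧ ≅ B := (shiftEquiv C k).unitIso.symm.app B
    refine ⟨{ n := n + 1
              obj := fun i ↦ if i ≤ n then F.obj i else E
              deg := fun i ↦ ((n + 1 : ℕ) : ℤ) - k - i
              factor := fun i ↦ if i ≤ n then F.factor i else B⟦k⟧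
              zero := by simpa using F.zero
              top := eqToIso (by simp)
              mem := ?_
              strict := by lia
              tri := ?_ }, rfl, fun _ ↦ rfl⟩
    · intro i hi hi'
      split_ifs with hin
      · exact F.mem i hi (by lia)
      · exact (T.shift_mem_heart_iff B k).2 ⟨hB', hB⟩
    · intro i hi hi'
      by_cases hin : i ≤ n
      · have hd : ((n + 1 : ℕ) : ℤ) - k - i = F.deg i := by
          rw [hdeg]
          push_cast
          ring
        rw [hd]
        rw [if_pos hin, if_pos hin, if_pos (show i - 1 ≤ n by lia)]
        exact F.tri i hi (by lia)
      · obtain rfl : i = n + 1 := by lia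
        have hd : ((n + 1 : ℕ) : ℤ) - k - (n + 1 : ℕ) = -k := by ring
        rw [hd]
        rw [if_neg hin, if_neg hin, Nat.add_sub_cancel, if_pos le_rfl]
        exact ⟨_, _, _, distinguished_of_iso₁₃ mem e eB⟩

variable {T}

lemma HeartFiltration.isLE_obj {M : C} (F : HeartFiltration C T M) (t : TStructure C) (n : ℤ)
    (j : ℕ) (hj : j ≤ F.n)
    (hF : ∀ i, 1 ≤ i → i ≤ j → t.IsLE ((F.factor i)⟦F.deg i⟧) n) : t.IsLE (F.obj j) n := by
  induction j with
  | zero => exact t.isLE_of_isZero F.zero n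
  | succ j ih =>
    obtain ⟨f, g, h, mem⟩ := F.tri (j + 1) (by lia) hj
    exact t.isLE₂ _ mem n (ih (by lia) fun i hi hi' ↦ hF i hi (by lia)) (hF _ (by lia) le_rfl)

lemma HeartFiltration.isLE {M : C} (F : HeartFiltration C T M) (t : TStructure C) (n : ℤ)
    (hF : ∀ i, 1 ≤ i → i ≤ F.n → t.IsLE ((F.factor i)⟦F.deg i⟧) n) : t.IsLE M n :=
  have := F.isLE_obj t n F.n le_rfl hF
  t.isLE_of_iso F.top n

lemma HeartFiltration.isLE_shift_factor {M : C} (F : HeartFiltration C T M) {i : ℕ} (hi : 1 ≤ i)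
    (hi' : i ≤ F.n) : T.toTStructure.IsLE ((F.factor i)⟦F.deg i⟧) (-F.deg i) :=
  have := ((T.mem_heart_iff _).1 (F.mem i hi hi')).1
  T.toTStructure.isLE_shift _ 0 _ _

lemma HeartFiltration.isGE_shift_factor {M : C} (F : HeartFiltration C T M) {i : ℕ} (hi : 1 ≤ i)
    (hi' : i ≤ F.n) : T.toTStructure.IsGE ((F.factor i)⟦F.deg i⟧) (-F.deg i) :=
  have := ((T.mem_heart_iff _).1 (F.mem i hi hi')).2
  T.toTStructure.isGE_shift _ 0 _ _

lemma HeartFiltration.isLE_obj_pred {M : C} (F : HeartFiltration C T M) {i : ℕ} (hi : 1 ≤ i)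
    (hi' : i ≤ F.n) : T.toTStructure.IsLE (F.obj (i - 1)) (-F.deg i - 1) := by
  refine F.isLE_obj _ _ _ (by lia) fun j hj hj' ↦ ?_
  have := F.isLE_shift_factor hj (by lia)
  have := F.strict j i hj (by lia) hi'
  exact T.toTStructure.isLE_of_le _ (-F.deg j) _

/-- Descending step for a filtration of an object `M` concentrated in cohomological degree `n`:
if `obj i` is `0` or `M`, then so is `obj (i - 1)`, and a nonzero factor is `M`, shifted. -/
lemma HeartFiltration.isZero_or_iso_pred {M : C} (F : HeartFiltration C T M) (n : ℤ)
    (hLE : T.toTStructure.IsLE M n) (hGE : T.toTStructure.IsGE M n) {i : ℕ} (hi : 1 ≤ i)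
    (hi' : i ≤ F.n) (H : IsZero (F.obj i) ∨ Nonempty (F.obj i ≅ M)) :
    (IsZero (F.obj (i - 1)) ∨ Nonempty (F.obj (i - 1) ≅ M)) ∧
      (IsZero (F.factor i) ∨
        F.deg i = -n ∧ Nonempty ((F.factor i)⟦F.deg i⟧ ≅ M)) := by
  let t := T.toTStructure
  have hA := F.isLE_obj_pred hi hi'
  have hL := F.isLE_shift_factor hi hi'
  have hG := F.isGE_shift_factor hi hi'
  obtain ⟨f, g, h, mem⟩ := F.tri i hi hi'
  have of_factor (hz : IsZero ((F.factor i)⟦F.deg i⟧)) :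
      (IsZero (F.obj (i - 1)) ∨ Nonempty (F.obj (i - 1) ≅ M)) ∧
      (IsZero (F.factor i) ∨ F.deg i = -n ∧ Nonempty ((F.factor i)⟦F.deg i⟧ ≅ M)) := by
    have : IsIso f := (Triangle.isZero₃_iff_isIso₁ _ mem).1 hz
    exact ⟨H.imp (·.of_iso (asIso f)) (fun ⟨e⟩ ↦ ⟨asIso f ≪≫ e⟩),
      .inl (((shiftFunctor C (-F.deg i)).map_isZero hz).of_iso
        ((shiftEquiv C (F.deg i)).unitIso.app _))⟩
  have of_LE (hi : t.IsLE (F.obj i) (-F.deg i - 1)) : IsZero ((F.factor i)⟦F.deg i⟧) := by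
    have := isLE₃ t mem (-F.deg i - 1) (t.isLE_of_le _ (-F.deg i - 1) _) hi
    exact t.isZero _ (-F.deg i - 1) (-F.deg i)
  obtain hz | ⟨⟨e⟩⟩ := H
  · exact of_factor (of_LE (t.isLE_of_isZero hz _))
  · have hLE' : t.IsLE (F.obj i) n := t.isLE_of_iso e.symm n
    have hGE' : t.IsGE (F.obj i) n := t.isGE_of_iso e.symm n
    obtain hlt | heq | hgt := lt_trichotomy (F.deg i) (-n)
    · exact of_factor (of_LE (t.isLE_of_le _ n _))
    · have hz : IsZero (F.obj (i - 1)) := by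
        have := isGE₁ t mem n hGE' (t.isGE_of_ge _ _ (-F.deg i))
        exact t.isZero _ (-F.deg i - 1) n
      have : IsIso g := (Triangle.isZero₁_iff_isIso₂ _ mem).1 hz
      exact ⟨.inl hz, .inr ⟨heq, ⟨(asIso g).symm ≪≫ e⟩⟩⟩
    · have hE : t.IsLE (F.obj i) (-F.deg i) :=
        t.isLE₂ _ mem _ (t.isLE_of_le (F.obj (i - 1)) (-F.deg i - 1) _) hL
      have hz : IsZero (F.obj i) := t.isZero _ (-F.deg i) n
      exact of_factor (of_LE (t.isLE_of_isZero hz _))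

lemma HeartFiltration.isZero_or_iso_of_isLE_of_isGE {M : C} (F : HeartFiltration C T M) (n : ℤ)
    (hLE : T.toTStructure.IsLE M n) (hGE : T.toTStructure.IsGE M n) {i : ℕ} (hi : 1 ≤ i)
    (hi' : i ≤ F.n) :
    IsZero (F.factor i) ∨ F.deg i = -n ∧ Nonempty ((F.factor i)⟦F.deg i⟧ ≅ M) := by
  have key (j : ℕ) (hj : j ≤ F.n) : IsZero (F.obj j) ∨ Nonempty (F.obj j ≅ M) := by
    induction hj using Nat.decreasingInduction with
    | self => exact .inr ⟨F.top⟩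
    | of_succ j hj ih => exact (F.isZero_or_iso_pred n hLE hGE (by lia) hj ih).1
  exact (F.isZero_or_iso_pred n hLE hGE hi hi' (key i hi')).2

lemma isLE_biproduct [HasFiniteBiproducts C] (t : TStructure C) (m : ℕ) (S : C) (n : ℤ)
    (hS : t.IsLE S n) : t.IsLE (⨁ fun _ : Fin m => S) n := by
  rw [t.isLE_iff_orthogonal n (n + 1) rfl]
  intro Y f hY
  refine biproduct.hom_ext' _ _ fun j ↦ ?_
  rw [t.zero (biproduct.ι _ j ≫ f) n (n + 1), comp_zero]

end TStructures

section SimpleTilt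

open Triangulated

variable {C}
variable {T T0 : TStr C} {S : C}

lemma isLE_of_heart_subset {T' : TStr C} {t0 : TStructure C} {m : ℤ}
    (hH : ∀ E ∈ heart C T', t0.IsLE E m) {X : C} {k : ℤ} (hX : T'.toTStructure.IsLE X k) :
    t0.IsLE X (k + m) := by
  obtain ⟨b, hb⟩ := T'.exists_isGE X
  obtain ⟨n, hn⟩ := Int.le.dest (min_le_right b k)
  obtain ⟨F, hFn, hdeg⟩ := exists_heartFiltration T' (n + 1) k X hX
    (T'.toTStructure.isGE_of_ge _ _ b (by push_cast; lia))
  refine F.isLE t0 _ fun i hi hi' ↦ ?_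
  have := hH _ (F.mem i hi hi')
  have hd := hdeg i
  have := t0.isLE_shift (F.factor i) m (F.deg i) (m - F.deg i)
  exact t0.isLE_of_le _ (m - F.deg i) _

lemma isLE_or_isGE_of_isSimpleIn
    (hT : ∀ (X : C), T0.toTStructure.IsLE X 1 → T.toTStructure.IsLE X 0)
    (hT' : ∀ (X : C), T0.toTStructure.IsGE X 2 → T.toTStructure.IsGE X 0)
    (hS : IsSimpleIn C (heart C T) S) :
    T0.toTStructure.IsLE S 1 ∨ T0.toTStructure.IsGE S 2 := by
  let t := T.toTStructure
  let t0 := T0.toTStructure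
  obtain ⟨hLE, hGE⟩ := (T.mem_heart_iff S).1 hS.1
  obtain ⟨A, B, hA, hB, f, g, h, mem⟩ := t0.exists_triangle S 1 2 (by lia)
  replace hA : t0.IsLE A 1 := ⟨hA⟩
  replace hB : t0.IsGE B 2 := ⟨hB⟩
  have hA0 := hT A hA
  have hB0 := hT' B hB
  obtain hz | hz := hS.2.2 A B f g h
    ((T.mem_heart_iff A).2 ⟨hA0, isGE₁ t mem 0 hGE (t.isGE_of_ge B _ 0)⟩)
    ((T.mem_heart_iff B).2 ⟨isLE₃ t mem 0 (t.isLE_of_le A 0 _) hLE, hB0⟩) mem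
  · exact .inr (t0.isGE₂ _ mem 2 (t0.isGE_of_isZero hz _) hB)
  · exact .inl (t0.isLE₂ _ mem 1 hA (t0.isLE_of_isZero hz _))

variable [HasFiniteBiproducts C]

lemma shift_neg_one_mem_simpleFlatSet (hS : S ∈ heart C T) :
    S⟦(-1 : ℤ)⟧ ∈ simpleFlatSet C T S := by
  obtain ⟨_, _⟩ := (T.mem_heart_iff S).1 hS
  intro F i hi hi'
  refine (F.isZero_or_iso_of_isLE_of_isGE 1 (T.toTStructure.isLE_shift S 0 _ _)
    (T.toTStructure.isGE_shift S 0 _ _) hi hi').imp_right fun ⟨hdeg, ⟨e⟩⟩ ↦ .inr ⟨hdeg, 1, ?_⟩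
  rw [hdeg] at e
  exact ⟨(shiftFunctor C (-1 : ℤ)).preimageIso e ≪≫ (biproductUniqueIso fun _ : Fin 1 ↦ S).symm⟩

/-- If `S[1]` lies in the aisle `T0.P ⊇ T.P[2]`, then so does `E[2]` for all `E` in the simple
backward tilt. -/
lemma isLE_of_mem_simpleFlatSet
    (hT : ∀ (X : C), T.toTStructure.IsLE X (-2) → T0.toTStructure.IsLE X 0)
    (hS : T0.toTStructure.IsLE S 1) {E : C} (hE : E ∈ simpleFlatSet C T S) :
    T0.toTStructure.IsLE E 2 := by
  let t := T.toTStructure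
  let t0 := T0.toTStructure
  obtain ⟨b, hb⟩ := T.exists_isGE E
  obtain ⟨a, ha⟩ := T.bounded_above E
  replace ha : t.IsLE E (max a b) := ⟨ha _ (le_max_left _ _)⟩
  obtain ⟨n, hn⟩ := Int.le.dest (le_max_right a b)
  obtain ⟨F, -, -⟩ := exists_heartFiltration T (n + 1) (max a b) E ha
    (by convert hb using 1; push_cast; lia)
  refine F.isLE t0 2 fun i hi hi' ↦ ?_
  obtain hz | ⟨hdeg, hX, -⟩ | ⟨hdeg, m, ⟨e⟩⟩ := hE F i hi hi'
  · exact t0.isLE_of_isZero ((shiftFunctor C _).map_isZero hz) _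
  · have : t.IsLE (F.factor i) 0 := ((T.mem_heart_iff _).1 hX).1
    have : t0.IsLE ((F.factor i)⟦(2 : ℤ)⟧) 0 := hT _ (t.isLE_shift _ 0 2 _)
    have := t0.isLE_of_shift (F.factor i) 2 2 0
    exact t0.isLE_shift (F.factor i) 2 _ _
  · have := isLE_biproduct t0 m S 1 hS
    have := t0.isLE_of_iso e.symm 1
    exact t0.isLE_shift (F.factor i) 1 _ _

end SimpleTilt

/-- Let `H`, `H0` be hearts with `H[1] ≤ H0 ≤ H[2]` and `S` a rigid
simple of `H` for which the simple backward tilt `H^♭_S` is defined.  Then the following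
are equivalent: (i) `S[2] ∉ H0`; (ii) `H0 ≤ H^♭_S[2]`; (iii) `S[1] ∈ H0`.
Consequently exactly one of `S[1] ∈ H0`, `S[2] ∈ H0` holds; in particular
`S ∈ H0[-1]` or `S ∈ H0[-2]`. -/
theorem statement_18 [HasFiniteBiproducts C] (T T0 : TStr C)
    (h1 : T0.P ⊆ shiftSet C T.P 1) (h2 : shiftSet C T.P 2 ⊆ T0.P)
    (S : C) (hS : IsSimpleIn C (heart C T) S)
    (hrigid : ∀ f : S ⟶ S⟦(1 : ℤ)⟧, f = 0)
    (Tflat : TStr C) (h : heart C Tflat = simpleFlatSet C T S) :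
    List.TFAE [S⟦(2 : ℤ)⟧ ∉ heart C T0,
      shiftSet C Tflat.P 2 ⊆ T0.P,
      S⟦(1 : ℤ)⟧ ∈ heart C T0] ∧
    Xor' (S⟦(1 : ℤ)⟧ ∈ heart C T0) (S⟦(2 : ℤ)⟧ ∈ heart C T0) ∧
    (S ∈ shiftSet C (heart C T0) (-1) ∨ S ∈ shiftSet C (heart C T0) (-2)) := by
  let t := T.toTStructure
  let t0 := T0.toTStructure
  have h1' (X : C) (hX : t0.IsLE X 0) : t.IsLE X (-1) :=
    (T.mem_shiftSet_P_iff X 1).1 (h1 ((T0.mem_P_iff X).2 hX))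
  have h2' (X : C) (hX : t.IsLE X (-2)) : t0.IsLE X 0 :=
    (T0.mem_P_iff X).1 (h2 ((T.mem_shiftSet_P_iff X 2).2 hX))
  have hle (X : C) (hX : t0.IsLE X 1) : t.IsLE X 0 :=
    have := h1' _ (t0.isLE_shift X 1 1 0)
    t.isLE_of_shift X 0 1 (-1)
  have hle' (X : C) (hX : t.IsLE X 0) : t0.IsLE X 2 :=
    have := h2' _ (t.isLE_shift X 0 2 (-2))
    t0.isLE_of_shift X 2 2 0
  have hge (X : C) (hX : t0.IsGE X 2) : t.IsGE X 0 := by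
    rw [t.isGE_iff_orthogonal (-1) 0 (by lia)]
    intro Y f hY
    have := hle' _ (t.isLE_shift Y (-1) (-1) 0)
    have := t0.isLE_of_shift Y 1 (-1) 2
    exact t0.zero f 1 2
  obtain ⟨hLE, hGE⟩ := (T.mem_heart_iff S).1 hS.1
  have hGE0 : t0.IsGE S 1 := by
    rw [t0.isGE_iff_orthogonal 0 1 (by lia)]
    intro Y f hY
    have := h1' Y hY
    exact t.zero f (-1) 0
  have iff₁ : S⟦(1 : ℤ)⟧ ∈ heart C T0 ↔ t0.IsLE S 1 := by
    rw [T0.shift_mem_heart_iff]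
    exact and_iff_left hGE0
  have iff₂ : S⟦(2 : ℤ)⟧ ∈ heart C T0 ↔ t0.IsGE S 2 := by
    rw [T0.shift_mem_heart_iff]
    exact and_iff_right (hle' S hLE)
  have dichotomy : t0.IsLE S 1 ∨ t0.IsGE S 2 := isLE_or_isGE_of_isSimpleIn hle hge hS
  have exclusive : ¬ (t0.IsLE S 1 ∧ t0.IsGE S 2) := fun ⟨_, _⟩ ↦ hS.2.1 (t0.isZero S 1 2)
  refine ⟨?_, ?_, ?_⟩
  · tfae_have 1 → 3 := by tauto
    tfae_have 3 → 1 := by tauto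
    tfae_have 2 → 3 := fun hflat ↦ by
      have hmem := shift_neg_one_mem_simpleFlatSet hS.1
      rw [← h, Tflat.mem_heart_iff] at hmem
      have := hmem.1
      have := Tflat.toTStructure.isLE_of_shift S (-1) (-1) 0
      rw [iff₁, ← T0.shift_mem_P_iff]
      exact hflat ((Tflat.mem_shiftSet_P_iff _ 2).2
        (Tflat.toTStructure.isLE_shift S (-1) 1 (-2)))
    tfae_have 3 → 2 := fun h3 X hX ↦ by
      rw [Tflat.mem_shiftSet_P_iff] at hX
      rw [T0.mem_P_iff]
      refine isLE_of_heart_subset (m := 2) (fun E hE ↦ ?_) hX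
      exact isLE_of_mem_simpleFlatSet h2' (iff₁.1 h3) (h ▸ hE)
    tfae_finish
  · rw [iff₁, iff₂]
    exact (xor_iff_or_and_not_and _ _).2 ⟨dichotomy, exclusive⟩
  · exact dichotomy.imp iff₁.2 iff₂.2

end Paper
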